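/- Let C be a quasiminimal pregeometry class, H ∈ C, and φ(v) an L_{ω₁,ω}-formula in one free variable, possibly using (countably many) parameters from H. Then the set φ(H) = {a ∈ H : H ⊨ φ(a)} is either countable or cocountable (its complement in H is countable). -/

import Mathlib

open FirstOrder FirstOrder.Language Set Cardinal



universe u u' v w

namespace QM

variable {L : FirstOrder.Language.{v, w}}

/-- Formulas of `L_{ω₁,ω}`: built from atomic formulas by negation, countable
conjunction (indexed by `ℕ`), and universal quantification; `α` is the type of free
variables and `n` counts the de Bruijn bound variables. Countable disjunctions and
the existential quantifier are definable via negation. -/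
inductive InfFormula (L : FirstOrder.Language.{v, w}) (α : Type u) : ℕ → Type (max u v w)
  | falsum {n : ℕ} : InfFormula L α n
  | equal {n : ℕ} (t₁ t₂ : L.Term (α ⊕ (Fin n))) : InfFormula L α n
  | rel {n l : ℕ} (R : L.Relations l) (ts : Fin l → L.Term (α ⊕ (Fin n))) : InfFormula L α n
  | not {n : ℕ} (φ : InfFormula L α n) : InfFormula L α n
  | iInf {n : ℕ} (φ : ℕ → InfFormula L α n) : InfFormula L α n
  | all {n : ℕ} (φ : InfFormula L α (n + 1)) : InfFormula L α n

/-- Satisfaction of an `L_{ω₁,ω}`-formula in an `L`-structure `M`, given an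
assignment `v` of the free variables and `xs` of the bound variables. -/
def InfFormula.Realize {M : Type u'} [L.Structure M] {α : Type u} :
    ∀ {n : ℕ}, InfFormula L α n → (α → M) → (Fin n → M) → Prop
  | _, .falsum, _, _ => False
  | _, .equal t₁ t₂, v, xs => t₁.realize (Sum.elim v xs) = t₂.realize (Sum.elim v xs)
  | _, .rel R ts, v, xs => Structure.RelMap R (fun i => (ts i).realize (Sum.elim v xs))
  | _, .not φ, v, xs => ¬ φ.Realize v xs
  | _, .iInf φ, v, xs => ∀ i : ℕ, (φ i).Realize v xs
  | _, .all φ, v, xs => ∀ x : M, φ.Realize v (Fin.snoc xs x)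

/-- An `L_{ω₁,ω}`-sentence. -/
abbrev InfSentence (L : FirstOrder.Language.{v, w}) := InfFormula L PEmpty 0

/-- Satisfaction of an `L_{ω₁,ω}`-sentence. -/
def InfSentence.RealizeS (M : Type u') [L.Structure M] (φ : InfSentence L) : Prop :=
  InfFormula.Realize (M := M) φ PEmpty.elim (fun i => i.elim0)

/-- Satisfaction of an `L_{ω₁,ω}`-formula with parameters from the set `A`
and `m` free variables `v̄`, at the tuple `v`. -/
def InfFormula.RealizeP {M : Type u'} [L.Structure M] {A : Set M} {m : ℕ}
    (φ : InfFormula L (↥A ⊕ Fin m) 0) (v : Fin m → M) : Prop :=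
  φ.Realize (Sum.elim Subtype.val v) (fun i => i.elim0)

/-- The domain of a partial map, viewed as a graph (set of pairs). -/
def pdom {H : Type*} {H' : Type*} (p : Set (H × H')) : Set H := Prod.fst '' p

/-- The image of a partial map, viewed as a graph (set of pairs). -/
def pimg {H : Type*} {H' : Type*} (p : Set (H × H')) : Set H' := Prod.snd '' p

/-- The image of a set `X` under a partial map given as a graph. -/
def pimage {H : Type*} {H' : Type*} (p : Set (H × H')) (X : Set H) : Set H' :=
  {b | ∃ a ∈ X, (a, b) ∈ p}

/-- A partial map (given as its graph `p`) is a partial embedding if it preserves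
quantifier-free first-order formulas. (This forces `p` to be the graph of an
injective partial function.) -/
def IsPartialEmbedding {H : Type u} {H' : Type u} [L.Structure H] [L.Structure H']
    (p : Set (H × H')) : Prop :=
  ∀ (n : ℕ) (φ : L.Formula (Fin n)), BoundedFormula.IsQF φ →
    ∀ (a : Fin n → H) (b : Fin n → H'), (∀ i, (a i, b i) ∈ p) →
      (φ.Realize a ↔ φ.Realize b)

/-- A partial map is a σ-embedding if it is a partial embedding and preserves all
`L_{ω₁,ω}`-formulas with (possibly infinitely many) parameters from its domain;
equivalently `⟨M, m⟩_{m ∈ dom p} ≡_{ω₁,ω} ⟨N, p(m)⟩_{m ∈ dom p}`. -/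
def IsSigmaEmbedding {H : Type u} {H' : Type u} [L.Structure H] [L.Structure H']
    (p : Set (H × H')) : Prop :=
  IsPartialEmbedding (L := L) p ∧
    ∀ (φ : InfFormula L (↥(pdom p)) 0) (b : ↥(pdom p) → H'),
      (∀ x : ↥(pdom p), ((x : H), b x) ∈ p) →
        (φ.Realize Subtype.val (fun i => i.elim0) ↔ φ.Realize b (fun i => i.elim0))

/-- A pregeometry (combinatorial geometry) on a set. -/
structure IsPregeometry {α : Type*} (cl : Set α → Set α) : Prop where
  subset_cl : ∀ X, X ⊆ cl X
  mono : ∀ ⦃X Y : Set α⦄, X ⊆ Y → cl X ⊆ cl Y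
  idem : ∀ X, cl (cl X) = cl X
  finChar : ∀ (X : Set α) (y : α), y ∈ cl X → ∃ F : Finset α, ↑F ⊆ X ∧ y ∈ cl ↑F
  exchange : ∀ (X : Set α) (a b : α), a ∈ cl (X ∪ {b}) → a ∉ cl X → b ∈ cl (X ∪ {a})

/-- A pair `⟨H, cl_H⟩` of an `L`-structure and a closure operator on it. -/
structure QMObj (L : FirstOrder.Language.{v, w}) where
  carrier : Type u
  [str : L.Structure carrier]
  cl : Set carrier → Set carrier

attribute [instance] QMObj.str

/-- `G` is countable and closed, or empty. -/
def CCOE (H : QMObj.{u} L) (G : Set H.carrier) : Prop :=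
  (G.Countable ∧ H.cl G = G) ∨ G = ∅

/-- The axioms for a class of pairs `⟨H, cl_H⟩` to be a quasiminimal pregeometry class. -/
structure IsQMClass (C : Set (QMObj.{u} L)) : Prop where
  /-- Closure under isomorphisms, transporting the closure operator. -/
  iso_closed : ∀ H ∈ C, ∀ (N : Type u) [_iN : L.Structure N] (f : H.carrier ≃[L] N),
      (⟨N, fun X => f '' (H.cl (f ⁻¹' X))⟩ : QMObj L) ∈ C
  /-- Any two members satisfy the same quantifier-free sentences. -/
  qf_theory : ∀ H ∈ C, ∀ H' ∈ C, ∀ (φ : L.Sentence), BoundedFormula.IsQF φ →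
      (H.carrier ⊨ φ ↔ H'.carrier ⊨ φ)
  /-- Each `cl_H` is a pregeometry. -/
  pregeom : ∀ H ∈ C, IsPregeometry H.cl
  /-- The closure of a finite set is countable. -/
  cl_finite_countable : ∀ H ∈ C, ∀ X : Set H.carrier, X.Finite → (H.cl X).Countable
  /-- The closure of any set is (the underlying set of) a substructure which, with the
  restricted closure operator, is again a member of the class. -/
  cl_mem : ∀ H ∈ C, ∀ X : Set H.carrier, ∃ S : L.Substructure H.carrier,
      (S : Set H.carrier) = H.cl X ∧
      (⟨↥S, fun Y => Subtype.val ⁻¹' (H.cl (Subtype.val '' Y))⟩ : QMObj L) ∈ C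
  /-- Partial embeddings preserve and reflect the closure relation. -/
  cl_embedding : ∀ H ∈ C, ∀ H' ∈ C, ∀ (p : Set (H.carrier × H'.carrier)),
      IsPartialEmbedding (L := L) p → ∀ X ⊆ pdom p, ∀ (y : H.carrier) (y' : H'.carrier),
        (y, y') ∈ p → (y ∈ H.cl X ↔ y' ∈ H'.cl (pimage p X))
  /-- ℵ₀-homogeneity over countable closed models, part (i): an isomorphism between
  countable closed (or empty) sets extends by any pair of independent points. -/
  homogeneity₁ : ∀ H ∈ C, ∀ H' ∈ C, ∀ (g : Set (H.carrier × H'.carrier)),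
      CCOE H (pdom g) → CCOE H' (pimg g) → IsPartialEmbedding (L := L) g →
      ∀ (x : H.carrier) (x' : H'.carrier), x ∉ H.cl (pdom g) → x' ∉ H'.cl (pimg g) →
        IsPartialEmbedding (L := L) (g ∪ {(x, x')})
  /-- ℵ₀-homogeneity over countable closed models, part (ii). -/
  homogeneity₂ : ∀ H ∈ C, ∀ H' ∈ C, ∀ (g f : Set (H.carrier × H'.carrier)),
      CCOE H (pdom g) → CCOE H' (pimg g) → IsPartialEmbedding (L := L) g →
      (pdom f).Finite → IsPartialEmbedding (L := L) (g ∪ f) →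
      ∀ y ∈ H.cl (pdom f ∪ pdom g), ∃ y' : H'.carrier,
        IsPartialEmbedding (L := L) (g ∪ f ∪ {(y, y')})


/-- `p` is a σ-type over `A` in `m` variables: every countable subset of `p` is
consistent with the structure, i.e. simultaneously satisfiable. -/
def IsSigmaType {M : Type u'} [L.Structure M] {A : Set M} {m : ℕ}
    (p : Set (InfFormula L (↥A ⊕ Fin m) 0)) : Prop :=
  ∀ Φ ⊆ p, Φ.Countable → ∃ v : Fin m → M, ∀ φ ∈ Φ, φ.RealizeP v

/-- A σ-type `p` is isolated if there is a consistent `L_{ω₁,ω}`-formula `ψ(x̄)`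
(possibly with parameters from `M`) such that `ψ` implies every formula of `p`. -/
def IsIsolated {M : Type u'} [L.Structure M] {A : Set M} {m : ℕ}
    (p : Set (InfFormula L (↥A ⊕ Fin m) 0)) : Prop :=
  ∃ ψ : InfFormula L (M ⊕ Fin m) 0,
    (∃ v : Fin m → M, ψ.Realize (Sum.elim id v) (fun i => i.elim0)) ∧
    ∀ φ ∈ p, ∀ v : Fin m → M, ψ.Realize (Sum.elim id v) (fun i => i.elim0) → φ.RealizeP v

/-- A σ-type `p` is realised if some tuple satisfies every formula of `p`. -/
def IsRealized {M : Type u'} [L.Structure M] {A : Set M} {m : ℕ}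
    (p : Set (InfFormula L (↥A ⊕ Fin m) 0)) : Prop :=
  ∃ v : Fin m → M, ∀ φ ∈ p, φ.RealizeP v

/-- `B` is an independent subset of the pregeometry `⟨H, cl_H⟩`. -/
def IsIndep (H : QMObj.{u} L) (B : Set H.carrier) : Prop :=
  ∀ x ∈ B, x ∉ H.cl (B \ {x})

/-- `B` is a basis of the pregeometry `⟨H, cl_H⟩`: a maximal independent subset. -/
def IsBasis (H : QMObj.{u} L) (B : Set H.carrier) : Prop :=
  IsIndep H B ∧ ∀ B' : Set H.carrier, B ⊆ B' → IsIndep H B' → B' = B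

/-- The model-theoretic algebraic closure of `X` in `M`: the set of elements
satisfying some first-order formula with parameters in `X` having finitely many
solutions. -/
def aclS (L : FirstOrder.Language.{v, w}) (M : Type u) [L.Structure M] (X : Set M) :
    Set M :=
  {y | ∃ (n : ℕ) (φ : L.BoundedFormula (Fin n) 1) (v : Fin n → M),
    (∀ i, v i ∈ X) ∧ φ.Realize v ![y] ∧ {z : M | φ.Realize v ![z]}.Finite}


theorem exists_terms {β : Type*} {l : ℕ} (ts : Fin l → L.Term β) :
    ∃ (k : ℕ) (c : Fin k → β) (ts' : Fin l → L.Term (Fin k)),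
      ∀ (M : Type u') [L.Structure M] (v : β → M) (i : Fin l),
        (ts' i).realize (v ∘ c) = (ts i).realize v := by
  classical
  let s : Finset β := Finset.univ.biUnion fun i => (ts i).varFinset
  have hs : ∀ i, (ts i).varFinset ⊆ s := fun i =>
    Finset.subset_biUnion_of_mem (fun i => (ts i).varFinset) (Finset.mem_univ i)
  refine ⟨s.card, fun j => (s.equivFin.symm j : β),
    fun i => (ts i).restrictVar (fun x => s.equivFin ⟨x.1, hs i x.2⟩), ?_⟩
  intro M _ v i
  exact Term.realize_restrictVar v (by intro a; simp)

theorem pe_equal {M N : Type u} [L.Structure M] [L.Structure N] {p : Set (M × N)}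
    (hp : IsPartialEmbedding (L := L) p) {β : Type*} (v : β → M) (v' : β → N)
    (h : ∀ i, (v i, v' i) ∈ p) (t₁ t₂ : L.Term β) :
    (t₁.realize v = t₂.realize v ↔ t₁.realize v' = t₂.realize v') := by
  obtain ⟨k, c, ts', hts⟩ := exists_terms.{u} ![t₁, t₂]
  have := hp k (Term.equal (ts' 0) (ts' 1))
    (BoundedFormula.IsAtomic.equal _ _).isQF (v ∘ c) (v' ∘ c) (fun i => h _)
  simpa [Formula.realize_equal, hts] using this

theorem pe_rel {M N : Type u} [L.Structure M] [L.Structure N] {p : Set (M × N)}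
    (hp : IsPartialEmbedding (L := L) p) {β : Type*} (v : β → M) (v' : β → N)
    (h : ∀ i, (v i, v' i) ∈ p) {l : ℕ} (R : L.Relations l) (ts : Fin l → L.Term β) :
    (Structure.RelMap R (fun i => (ts i).realize v) ↔
      Structure.RelMap R (fun i => (ts i).realize v')) := by
  obtain ⟨k, c, ts', hts⟩ := exists_terms.{u} ts
  have := hp k (Relations.formula R ts')
    (BoundedFormula.IsAtomic.rel _ _).isQF (v ∘ c) (v' ∘ c) (fun i => h _)
  simpa only [Formula.realize_rel, hts] using this

theorem pe_mono {M N : Type u} [L.Structure M] [L.Structure N] {p q : Set (M × N)}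
    (hp : IsPartialEmbedding (L := L) p) (h : q ⊆ p) : IsPartialEmbedding (L := L) q :=
  fun n φ hφ a b hab => hp n φ hφ a b fun i => h (hab i)

theorem pe_func {M N : Type u} [L.Structure M] [L.Structure N] {p : Set (M × N)}
    (hp : IsPartialEmbedding (L := L) p) {a : M} {b b' : N} (h : (a, b) ∈ p) (h' : (a, b') ∈ p) :
    b = b' := by
  have := pe_equal hp (β := Bool) (fun _ => a) (fun i => if i then b else b')
    (by intro i; cases i <;> simp [h, h']) (Term.var true) (Term.var false)
  simpa using this

theorem pe_swap {M N : Type u} [L.Structure M] [L.Structure N] {p : Set (M × N)}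
    (hp : IsPartialEmbedding (L := L) p) :
    IsPartialEmbedding (L := L) (Prod.swap ⁻¹' p : Set (N × M)) :=
  fun n φ hφ a b hab => (hp n φ hφ b a hab).symm

theorem pdom_swap {M N : Type*} (p : Set (M × N)) :
    pdom (Prod.swap ⁻¹' p : Set (N × M)) = pimg p := by
  ext x; simp [pdom, pimg]

theorem pimg_swap {M N : Type*} (p : Set (M × N)) :
    pimg (Prod.swap ⁻¹' p : Set (N × M)) = pdom p := by
  ext x; simp [pdom, pimg]

theorem cl_countable {C : Set (QMObj.{u} L)} (hC : IsQMClass C) {H : QMObj.{u} L} (hH : H ∈ C)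
    {P : Set H.carrier} (hP : P.Countable) : (H.cl P).Countable := by
  have hsub : H.cl P ⊆ ⋃ F ∈ {F : Set H.carrier | F.Finite ∧ F ⊆ P}, H.cl F := by
    intro y hy
    obtain ⟨F, hF, hy⟩ := (hC.pregeom H hH).finChar P y hy
    simp only [Set.mem_iUnion]
    exact ⟨F, ⟨F.finite_toSet, hF⟩, hy⟩
  refine Set.Countable.mono hsub (Set.Countable.biUnion ?_ ?_)
  · exact Set.countable_setOf_finite_subset hP
  · intro F hF
    exact hC.cl_finite_countable H hH F hF.1

/-- Partial isomorphisms between countable closed sets. -/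
structure Good (H : QMObj.{u} L) (g : Set (H.carrier × H.carrier)) : Prop where
  pe : IsPartialEmbedding (L := L) g
  dc : (pdom g).Countable
  dcl : H.cl (pdom g) = pdom g
  ic : (pimg g).Countable
  icl : H.cl (pimg g) = pimg g

theorem Good.swap {H : QMObj.{u} L} {g : Set (H.carrier × H.carrier)} (h : Good H g) :
    Good H (Prod.swap ⁻¹' g) where
  pe := pe_swap h.pe
  dc := by rw [pdom_swap]; exact h.ic
  dcl := by rw [pdom_swap]; exact h.icl
  ic := by rw [pimg_swap]; exact h.dc
  icl := by rw [pimg_swap]; exact h.dcl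

/-- Finite approximations. -/
structure Approx (H : QMObj.{u} L) (g : Set (H.carrier × H.carrier)) (x x' : H.carrier)
    (f : Set (H.carrier × H.carrier)) : Prop where
  fin : f.Finite
  mem : (x, x') ∈ f
  pe : IsPartialEmbedding (L := L) (g ∪ f)
  dsub : ∀ q ∈ f, q.1 ∈ H.cl (pdom g ∪ {x})
  isub : ∀ q ∈ f, q.2 ∈ H.cl (pimg g ∪ {x'})

theorem Approx.swap {H : QMObj.{u} L} {g : Set (H.carrier × H.carrier)} {x x' : H.carrier}
    {f : Set (H.carrier × H.carrier)} (h : Approx H g x x' f) :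
    Approx H (Prod.swap ⁻¹' g) x' x (Prod.swap ⁻¹' f) where
  fin := h.fin.preimage Prod.swap_injective.injOn
  mem := h.mem
  pe := by rw [← Set.preimage_union]; exact pe_swap h.pe
  dsub := by intro q hq; rw [pdom_swap]; exact h.isub _ hq
  isub := by intro q hq; rw [pimg_swap]; exact h.dsub _ hq

theorem Approx.forth {C : Set (QMObj.{u} L)} (hC : IsQMClass C) {H : QMObj.{u} L} (hH : H ∈ C)
    {g : Set (H.carrier × H.carrier)} (hg : Good H g) {x x' : H.carrier}
    {f : Set (H.carrier × H.carrier)} (h : Approx H g x x' f) {y : H.carrier}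
    (hy : y ∈ H.cl (pdom g ∪ {x})) :
    ∃ f', Approx H g x x' f' ∧ f ⊆ f' ∧ y ∈ pdom f' := by
  have hpg := hC.pregeom H hH
  have hxf : x ∈ pdom f := ⟨_, h.mem, rfl⟩
  obtain ⟨y', hy'⟩ := hC.homogeneity₂ H hH H hH g f (Or.inl ⟨hg.dc, hg.dcl⟩)
    (Or.inl ⟨hg.ic, hg.icl⟩) hg.pe (h.fin.image _) h.pe y
    (hpg.mono (by
      rintro z (hz | hz)
      · exact Or.inr hz
      · rw [Set.mem_singleton_iff] at hz; subst hz; exact Or.inl hxf) hy)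
  have hsubdom : pdom g ∪ {x} ⊆ pdom (g ∪ f ∪ {(y, y')}) := by
    rintro z (⟨q, hq, rfl⟩ | hz)
    · exact ⟨q, Or.inl (Or.inl hq), rfl⟩
    · rw [Set.mem_singleton_iff] at hz; subst hz
      exact ⟨_, Or.inl (Or.inr h.mem), rfl⟩
  have hcl := (hC.cl_embedding H hH H hH _ hy' _ hsubdom y y' (Or.inr rfl)).1 hy
  have hcl' : y' ∈ H.cl (pimg g ∪ {x'}) := by
    refine hpg.mono ?_ hcl
    rintro b ⟨a, ha | ha, hab⟩
    · obtain ⟨q, hq, rfl⟩ := ha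
      have : b = q.2 := pe_func hy' hab (Or.inl (Or.inl hq))
      exact Or.inl ⟨q, hq, this.symm⟩
    · rw [Set.mem_singleton_iff] at ha; subst ha
      exact Or.inr (pe_func hy' hab (Or.inl (Or.inr h.mem)))
  refine ⟨f ∪ {(y, y')}, ⟨h.fin.union (Set.finite_singleton _), Or.inl h.mem, ?_, ?_, ?_⟩,
    Set.subset_union_left, ⟨(y, y'), Or.inr rfl, rfl⟩⟩
  · rw [← Set.union_assoc]; exact hy'
  · rintro q (hq | rfl)
    · exact h.dsub q hq
    · exact hy
  · rintro q (hq | rfl)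
    · exact h.isub q hq
    · exact hcl'

theorem Approx.back {C : Set (QMObj.{u} L)} (hC : IsQMClass C) {H : QMObj.{u} L} (hH : H ∈ C)
    {g : Set (H.carrier × H.carrier)} (hg : Good H g) {x x' : H.carrier}
    {f : Set (H.carrier × H.carrier)} (h : Approx H g x x' f) {y : H.carrier}
    (hy : y ∈ H.cl (pimg g ∪ {x'})) :
    ∃ f', Approx H g x x' f' ∧ f ⊆ f' ∧ y ∈ pimg f' := by
  obtain ⟨f', h1, h2, h3⟩ := h.swap.forth hC hH hg.swap (y := y) (by rw [pdom_swap]; exact hy)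
  refine ⟨Prod.swap ⁻¹' f', ?_, ?_, ?_⟩
  · exact h1.swap
  · intro q hq
    exact h2 (show q.swap ∈ Prod.swap ⁻¹' f by simpa using hq)
  · rw [pimg_swap]; exact h3

theorem exists_good {C : Set (QMObj.{u} L)} (hC : IsQMClass C) {H : QMObj.{u} L} (hH : H ∈ C)
    {g : Set (H.carrier × H.carrier)} (hg : Good H g) {x x' : H.carrier}
    (hx : IsPartialEmbedding (L := L) (g ∪ {(x, x')})) :
    ∃ g', Good H g' ∧ g ⊆ g' ∧ (x, x') ∈ g' := by
  have hpg := hC.pregeom H hH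
  set A := H.cl (pdom g ∪ {x}) with hA
  set A' := H.cl (pimg g ∪ {x'}) with hA'
  have hAc : A.Countable := cl_countable hC hH (hg.dc.union (Set.countable_singleton _))
  have hAc' : A'.Countable := cl_countable hC hH (hg.ic.union (Set.countable_singleton _))
  have : Countable A := hAc.to_subtype
  have : Countable A' := hAc'.to_subtype
  obtain ⟨_⟩ := nonempty_encodable (A ⊕ A')
  let Q := {f : Set (H.carrier × H.carrier) // Approx H g x x' f}
  let f₀ : Q := ⟨{(x, x')}, Set.finite_singleton _, rfl, hx,
    by rintro q rfl; exact hpg.subset_cl _ (Or.inr rfl),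
    by rintro q rfl; exact hpg.subset_cl _ (Or.inr rfl)⟩
  let D : A ⊕ A' → Order.Cofinal Q := fun i => match i with
    | Sum.inl y => ⟨{f | y.1 ∈ pdom f.1}, fun f => by
        obtain ⟨f', h1, h2, h3⟩ := f.2.forth hC hH hg y.2
        exact ⟨⟨f', h1⟩, h3, h2⟩⟩
    | Sum.inr y => ⟨{f | y.1 ∈ pimg f.1}, fun f => by
        obtain ⟨f', h1, h2, h3⟩ := f.2.back hC hH hg y.2
        exact ⟨⟨f', h1⟩, h3, h2⟩⟩
  let F := Order.sequenceOfCofinals f₀ D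
  have hF : Monotone F := Order.sequenceOfCofinals.monotone f₀ D
  have hgA : pdom g ⊆ A := fun z hz => hpg.subset_cl _ (Or.inl hz)
  have hgA' : pimg g ⊆ A' := fun z hz => hpg.subset_cl _ (Or.inl hz)
  have hd : pdom (g ∪ ⋃ n, (F n).1) = A := by
    apply Set.Subset.antisymm
    · rintro _ ⟨q, hq | hq, rfl⟩
      · exact hgA ⟨q, hq, rfl⟩
      · obtain ⟨n, hn⟩ := Set.mem_iUnion.1 hq
        exact (F n).2.dsub q hn
    · intro y hy
      obtain ⟨q, hq, hqy⟩ : y ∈ pdom (F _).1 :=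
        Order.sequenceOfCofinals.encode_mem f₀ D (Sum.inl ⟨y, hy⟩)
      exact ⟨q, Or.inr (Set.mem_iUnion.2 ⟨_, hq⟩), hqy⟩
  have hi : pimg (g ∪ ⋃ n, (F n).1) = A' := by
    apply Set.Subset.antisymm
    · rintro _ ⟨q, hq | hq, rfl⟩
      · exact hgA' ⟨q, hq, rfl⟩
      · obtain ⟨n, hn⟩ := Set.mem_iUnion.1 hq
        exact (F n).2.isub q hn
    · intro y hy
      obtain ⟨q, hq, hqy⟩ : y ∈ pimg (F _).1 :=
        Order.sequenceOfCofinals.encode_mem f₀ D (Sum.inr ⟨y, hy⟩)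
      exact ⟨q, Or.inr (Set.mem_iUnion.2 ⟨_, hq⟩), hqy⟩
  refine ⟨g ∪ ⋃ n, (F n).1, ⟨?_, ?_, ?_, ?_, ?_⟩, Set.subset_union_left,
    Or.inr (Set.mem_iUnion.2 ⟨0, (F 0).2.mem⟩)⟩
  · intro n φ hφ a b hab
    have : ∀ i, ∃ m, (a i, b i) ∈ g ∪ (F m).1 := by
      intro i
      rcases hab i with h | h
      · exact ⟨0, Or.inl h⟩
      · obtain ⟨m, hm⟩ := Set.mem_iUnion.1 h
        exact ⟨m, Or.inr hm⟩
    choose m hm using this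
    refine (F (Finset.univ.sup m)).2.pe n φ hφ a b fun i => ?_
    rcases hm i with h | h
    · exact Or.inl h
    · exact Or.inr (hF (Finset.le_sup (Finset.mem_univ i)) h)
  · rw [hd]; exact hAc
  · rw [hd]; exact hpg.idem _
  · rw [hi]; exact hAc'
  · rw [hi]; exact hpg.idem _

theorem good_forth {C : Set (QMObj.{u} L)} (hC : IsQMClass C) {H : QMObj.{u} L} (hH : H ∈ C)
    (hunc : ¬ (Set.univ : Set H.carrier).Countable)
    {g : Set (H.carrier × H.carrier)} (hg : Good H g) (x : H.carrier) :
    ∃ g' x', Good H g' ∧ g ⊆ g' ∧ (x, x') ∈ g' := by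
  by_cases hx : x ∈ pdom g
  · obtain ⟨⟨a, b⟩, hq, rfl⟩ := hx
    exact ⟨g, b, hg, subset_rfl, hq⟩
  · obtain ⟨x', hx'⟩ : ∃ x', x' ∉ pimg g := by
      by_contra! hcon
      exact hunc (hg.ic.mono fun z _ => hcon z)
    obtain ⟨g', h⟩ := exists_good hC hH hg (hC.homogeneity₁ H hH H hH g (Or.inl ⟨hg.dc, hg.dcl⟩)
      (Or.inl ⟨hg.ic, hg.icl⟩) hg.pe x x' (by rwa [hg.dcl]) (by rwa [hg.icl]))
    exact ⟨g', x', h⟩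

theorem good_back {C : Set (QMObj.{u} L)} (hC : IsQMClass C) {H : QMObj.{u} L} (hH : H ∈ C)
    (hunc : ¬ (Set.univ : Set H.carrier).Countable)
    {g : Set (H.carrier × H.carrier)} (hg : Good H g) (x' : H.carrier) :
    ∃ g' x, Good H g' ∧ g ⊆ g' ∧ (x, x') ∈ g' := by
  obtain ⟨g', x, h1, h2, h3⟩ := good_forth hC hH hunc hg.swap x'
  exact ⟨Prod.swap ⁻¹' g', x, h1.swap,
    fun q hq => h2 (show q.swap ∈ Prod.swap ⁻¹' g by simpa using hq), h3⟩

theorem good_realize {C : Set (QMObj.{u} L)} (hC : IsQMClass C) {H : QMObj.{u} L} (hH : H ∈ C)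
    (hunc : ¬ (Set.univ : Set H.carrier).Countable) {α : Type*} {n : ℕ}
    (φ : InfFormula L α n) : ∀ (g : Set (H.carrier × H.carrier)), Good H g →
      ∀ (v v' : α → H.carrier) (xs xs' : Fin n → H.carrier), (∀ i, (v i, v' i) ∈ g) →
      (∀ i, (xs i, xs' i) ∈ g) → (φ.Realize v xs ↔ φ.Realize v' xs') := by
  induction φ with
  | falsum => intros; rfl
  | equal t₁ t₂ =>
    intro g hg v v' xs xs' hv hxs
    exact pe_equal hg.pe _ _ (by rintro (i | i) <;> simp [hv, hxs]) t₁ t₂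
  | rel R ts =>
    intro g hg v v' xs xs' hv hxs
    exact pe_rel hg.pe _ _ (by rintro (i | i) <;> simp [hv, hxs]) R ts
  | not φ ih =>
    intro g hg v v' xs xs' hv hxs
    exact not_congr (ih g hg v v' xs xs' hv hxs)
  | iInf φ ih =>
    intro g hg v v' xs xs' hv hxs
    exact forall_congr' fun i => ih i g hg v v' xs xs' hv hxs
  | all φ ih =>
    intro g hg v v' xs xs' hv hxs
    have key : ∀ g' y y', Good H g' → g ⊆ g' → (y, y') ∈ g' →
        (φ.Realize v (Fin.snoc xs y) ↔ φ.Realize v' (Fin.snoc xs' y')) := by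
      intro g' y y' hg' hsub hy
      refine ih g' hg' v v' _ _ (fun i => hsub (hv i)) ?_
      intro i
      refine Fin.lastCases ?_ (fun j => ?_) i
      · simpa using hy
      · simpa using hsub (hxs j)
    constructor
    · intro h y'
      obtain ⟨g', y, h1, h2, h3⟩ := good_back hC hH hunc hg y'
      exact (key g' y y' h1 h2 h3).1 (h y)
    · intro h y
      obtain ⟨g', y', h1, h2, h3⟩ := good_forth hC hH hunc hg y
      exact (key g' y y' h1 h2 h3).2 (h y')

/-- For `H ∈ C` and an `L_{ω₁,ω}`-formula `φ(v)` in one free variable,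
possibly using countably many parameters from `H`, the set `φ(H)` is countable or
cocountable. -/
theorem statement_5 {L : FirstOrder.Language.{v, w}} (C : Set (QMObj.{u} L))
    (hC : IsQMClass C) (H : QMObj.{u} L) (hH : H ∈ C)
    (P : Set H.carrier) (hP : P.Countable)
    (φ : InfFormula L (↥P ⊕ Fin 1) 0) :
    {a : H.carrier | φ.RealizeP (fun _ => a)}.Countable ∨
      {a : H.carrier | ¬ φ.RealizeP (fun _ => a)}.Countable := by
  have hpg := hC.pregeom H hH
  by_cases hunc : (Set.univ : Set H.carrier).Countable
  · exact Or.inl (hunc.mono (Set.subset_univ _))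
  have hGc : (H.cl P).Countable := cl_countable hC hH hP
  let g : Set (H.carrier × H.carrier) := {q | q.1 ∈ H.cl P ∧ q.1 = q.2}
  have hd : pdom g = H.cl P := by
    ext z
    exact ⟨by rintro ⟨q, hq, rfl⟩; exact hq.1, fun hz => ⟨(z, z), ⟨hz, rfl⟩, rfl⟩⟩
  have hi : pimg g = H.cl P := by
    ext z
    exact ⟨by rintro ⟨q, hq, rfl⟩; exact hq.2 ▸ hq.1, fun hz => ⟨(z, z), ⟨hz, rfl⟩, rfl⟩⟩
  have hg : Good H g := by
    refine ⟨?_, hd ▸ hGc, by rw [hd, hpg.idem], hi ▸ hGc, by rw [hi, hpg.idem]⟩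
    intro n ψ _ a b hab
    have : a = b := funext fun i => (hab i).2
    rw [this]
  have key : ∀ a b, a ∉ H.cl P → b ∉ H.cl P →
      (φ.RealizeP (fun _ => a) ↔ φ.RealizeP (fun _ => b)) := by
    intro a b ha hb
    obtain ⟨g', h1, h2, h3⟩ := exists_good hC hH hg
      (hC.homogeneity₁ H hH H hH g (Or.inl ⟨hg.dc, hg.dcl⟩) (Or.inl ⟨hg.ic, hg.icl⟩) hg.pe a b
        (by rwa [hd, hpg.idem]) (by rwa [hi, hpg.idem]))
    refine good_realize hC hH hunc φ g' h1 _ _ _ _ ?_ (fun i => i.elim0)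
    rintro (i | i)
    · exact h2 ⟨hpg.subset_cl _ i.2, rfl⟩
    · exact h3
  by_cases hex : ∃ a, a ∉ H.cl P ∧ φ.RealizeP (fun _ => a)
  · obtain ⟨a, ha, hφ⟩ := hex
    refine Or.inr (hGc.mono fun b hb => ?_)
    by_contra hbn
    exact hb ((key a b ha hbn).1 hφ)
  · refine Or.inl (hGc.mono fun b hb => ?_)
    by_contra hbn
    exact hex ⟨b, hbn, hb⟩

end QM
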